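/- arXiv:0710.2330 — 3 statements merged into one kernel-verified Lean document; each statement's English description precedes it below -/
import Mathlib

section
/- Let A be a vector space over ℚ, let B ⊆ A be a ℚ-linear subspace, let P ⊆ A be a cone, and let μ_B : B → ℝ be a nonzero ℚ-linear map such that μ_B(b) ≥ 0 for every b ∈ B ∩ P. Assume that for every a ∈ A there is b ∈ B with b − a ∈ P. Let c ∈ A and suppose the set {μ_B(y) : y ∈ B, y − c ∈ P} (which is nonempty by the cofinality assumption) is bounded below, with infimum e ∈ ℝ. Then there exists a ℚ-linear map μ : A → ℝ extending μ_B such that μ(p) ≥ 0 for all p ∈ P and μ(c) = e. -/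
/-- A subset `P` of a `ℚ`-vector space is a cone if it is closed under addition and
under scalar multiplication by positive rationals. -/
def IsQCone {A : Type*} [AddCommGroup A] [Module ℚ A] (P : Set A) : Prop :=
  (∀ x ∈ P, ∀ y ∈ P, x + y ∈ P) ∧ ∀ q : ℚ, 0 < q → ∀ x ∈ P, q • x ∈ P

/-- Sublinear functionals over the rationals. -/
def QSub {A : Type*} [AddCommGroup A] [Module ℚ A] (p : A → ℝ) : Prop :=
  (∀ x y, p (x + y) ≤ p x + p y) ∧ ∀ q : ℚ, 0 < q → ∀ x, p (q • x) ≤ q * p x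

theorem QSub.zero {A : Type*} [AddCommGroup A] [Module ℚ A] {p : A → ℝ} (h : QSub p) :
    p 0 = 0 := by
  have h1 := h.2 2 (by norm_num) 0
  have h2 := h.2 (1/2) (by norm_num) 0
  rw [smul_zero] at h1 h2
  push_cast at h1 h2
  linarith

theorem QSub.neg {A : Type*} [AddCommGroup A] [Module ℚ A] {p : A → ℝ} (h : QSub p) (x : A) :
    -p (-x) ≤ p x := by
  have h1 := h.1 x (-x)
  rw [add_neg_cancel, h.zero] at h1
  linarith

/-- Lowering step. -/
theorem QSub.lower {A : Type*} [AddCommGroup A] [Module ℚ A] {N : A → ℝ} (h : QSub N) (c : A) :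
    ∃ p : A → ℝ, QSub p ∧ (∀ x, p x ≤ N x) ∧ p (-c) ≤ -N c := by
  let f : A → {t : ℚ // 0 ≤ t} → ℝ := fun x t => N (x + t.1 • c) - t.1 * N c
  have hb : ∀ x, BddBelow (Set.range (f x)) := by
    intro x
    refine ⟨-N (-x), ?_⟩
    rintro _ ⟨t, rfl⟩
    have h1 := h.1 (x + t.1 • c) (-x)
    have h3 : x + t.1 • c + -x = t.1 • c := by abel
    rw [h3] at h1
    simp only [f]
    have h4 : (t.1 : ℝ) * N c ≤ N (t.1 • c) := by
      rcases t.2.eq_or_lt with h0 | h0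
      · rw [← h0]; simp [h.zero]
      · have h5 := h.2 t.1⁻¹ (inv_pos.2 h0) (t.1 • c)
        rw [smul_smul, inv_mul_cancel₀ h0.ne', one_smul] at h5
        have h6 : (0:ℝ) < t.1 := by exact_mod_cast h0
        push_cast at h5
        calc (t.1 : ℝ) * N c ≤ t.1 * ((t.1 : ℝ)⁻¹ * N (t.1 • c)) := by gcongr
          _ = N (t.1 • c) := by field_simp
    linarith
  have hle : ∀ x t, (⨅ t, f x t) ≤ f x t := fun x t => ciInf_le (hb x) t
  have : Nonempty {t : ℚ // 0 ≤ t} := ⟨⟨0, le_rfl⟩⟩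
  refine ⟨fun x => ⨅ t, f x t, ⟨?_, ?_⟩, ?_, ?_⟩
  · intro x y
    refine le_ciInf_add_ciInf fun s t => ?_
    refine (hle _ ⟨s.1 + t.1, add_nonneg s.2 t.2⟩).trans ?_
    have h1 := h.1 (x + s.1 • c) (y + t.1 • c)
    have h3 : x + s.1 • c + (y + t.1 • c) = x + y + (s.1 + t.1) • c := by rw [add_smul]; abel
    rw [h3] at h1
    simp only [f]
    push_cast
    linarith
  · intro q hq x
    have hq' : (0:ℝ) < q := by exact_mod_cast hq
    show _ ≤ (q:ℝ) * ⨅ t, f x t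
    rw [Real.mul_iInf_of_nonneg hq'.le]
    refine le_ciInf fun t => ?_
    refine (hle _ ⟨q * t.1, mul_nonneg hq.le t.2⟩).trans ?_
    have h1 := h.2 q hq (x + t.1 • c)
    rw [smul_add, smul_smul] at h1
    simp only [f]
    push_cast
    linarith
  · intro x
    refine (hle x ⟨0, le_rfl⟩).trans ?_
    simp [f]
  · refine (hle _ ⟨1, zero_le_one⟩).trans ?_
    simp [f, h.zero]

theorem QSub.exists_additive {A : Type*} [AddCommGroup A] [Module ℚ A] {N : A → ℝ}
    (h : QSub N) : ∃ μ : A →ₗ[ℚ] ℝ, ∀ x, μ x ≤ N x := by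
  obtain ⟨m, hm⟩ : ∃ m : (A → ℝ)ᵒᵈ, Maximal
      (fun q => q ∈ {p : (A → ℝ)ᵒᵈ | QSub (OrderDual.ofDual p) ∧
        ∀ x, OrderDual.ofDual p x ≤ N x}) m := by
    refine zorn_le₀ _ ?_
    intro C hC hch
    rcases C.eq_empty_or_nonempty with rfl | hne
    · exact ⟨OrderDual.toDual N, ⟨h, fun _ => le_rfl⟩, by simp⟩
    have : Nonempty C := hne.to_subtype
    let f : A → C → ℝ := fun x p => OrderDual.ofDual p.1 x
    have hb : ∀ x, BddBelow (Set.range (f x)) := by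
      intro x
      refine ⟨-N (-x), ?_⟩
      rintro _ ⟨p, rfl⟩
      have h1 := (hC p.2).1.neg x
      have h2 := (hC p.2).2 (-x)
      simp only [f]
      linarith
    have hle : ∀ x t, (⨅ t, f x t) ≤ f x t := fun x t => ciInf_le (hb x) t
    refine ⟨OrderDual.toDual (fun x => ⨅ t, f x t), ⟨⟨?_, ?_⟩, ?_⟩, ?_⟩
    · intro x y
      refine le_ciInf_add_ciInf fun s t => ?_
      rcases hch.total s.2 t.2 with hst | hst
      · refine (hle _ t).trans (((hC t.2).1.1 x y).trans ?_)
        exact add_le_add (hst x) le_rfl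
      · refine (hle _ s).trans (((hC s.2).1.1 x y).trans ?_)
        exact add_le_add le_rfl (hst y)
    · intro q hq x
      have hq' : (0:ℝ) < q := by exact_mod_cast hq
      show _ ≤ (q:ℝ) * ⨅ t, f x t
      rw [Real.mul_iInf_of_nonneg hq'.le]
      exact le_ciInf fun t => (hle _ t).trans ((hC t.2).1.2 q hq x)
    · intro x
      obtain ⟨t⟩ := ‹Nonempty C›
      exact (hle x t).trans ((hC t.2).2 x)
    · intro z hz x
      exact hle x ⟨z, hz⟩
  let p : A → ℝ := OrderDual.ofDual m
  have hp : QSub p := hm.prop.1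
  have hpN : ∀ x, p x ≤ N x := hm.prop.2
  have hneg : ∀ c, p (-c) ≤ -p c := by
    intro c
    obtain ⟨r, hr, hrp, hrc⟩ := hp.lower c
    have h1 : p ≤ r := hm.le_of_ge (y := OrderDual.toDual r)
      ⟨hr, fun x => (hrp x).trans (hpN x)⟩ hrp
    exact (h1 (-c)).trans hrc
  have hadd : ∀ x y, p (x + y) = p x + p y := by
    intro x y
    refine le_antisymm (hp.1 x y) ?_
    have h1 := hp.1 (x + y) (-y)
    rw [add_neg_cancel_right] at h1
    linarith [hneg y]
  exact ⟨(AddMonoidHom.mk' p hadd).toRatLinearMap, hpN⟩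

theorem stmt2 {A : Type*} [AddCommGroup A] [Module ℚ A]
    (B : Submodule ℚ A) (P : Set A) (hP : IsQCone P)
    (μB : B →ₗ[ℚ] ℝ) (hμBne : μB ≠ 0)
    (hμBpos : ∀ b : B, (b : A) ∈ P → 0 ≤ μB b)
    (hcof : ∀ a : A, ∃ b : B, (b : A) - a ∈ P)
    (c : A) (e : ℝ)
    (he : IsGLB {r : ℝ | ∃ y : B, (y : A) - c ∈ P ∧ μB y = r} e) :
    ∃ μ : A →ₗ[ℚ] ℝ, (∀ b : B, μ (b : A) = μB b) ∧ (∀ p ∈ P, 0 ≤ μ p) ∧ μ c = e := by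
  let f : (x : A) → {y : B // (y : A) - x ∈ P} → ℝ := fun x y => μB y.1
  have hne : ∀ x : A, Nonempty {y : B // (y : A) - x ∈ P} := fun x =>
    let ⟨b, hb⟩ := hcof x; ⟨⟨b, hb⟩⟩
  have hb : ∀ x, BddBelow (Set.range (f x)) := by
    intro x
    obtain ⟨b, hb⟩ := hcof (-x)
    refine ⟨-μB b, ?_⟩
    rintro _ ⟨y, rfl⟩
    have h1 := hP.1 _ y.2 _ hb
    have h2 : (y.1 : A) - x + ((b : A) - -x) = ((y.1 + b : B) : A) := by
      push_cast; abel
    rw [h2] at h1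
    have h3 := hμBpos _ h1
    rw [map_add] at h3
    simp only [f]
    linarith
  let N : A → ℝ := fun x => ⨅ y, f x y
  have hle : ∀ (x : A) (y : B), (y : A) - x ∈ P → N x ≤ μB y := fun x y hy =>
    ciInf_le (hb x) ⟨y, hy⟩
  have hN : QSub N := by
    refine ⟨?_, ?_⟩
    · intro x y
      refine le_ciInf_add_ciInf fun s t => ?_
      have h1 := hP.1 _ s.2 _ t.2
      have h2 : (s.1 : A) - x + ((t.1 : A) - y) = ((s.1 + t.1 : B) : A) - (x + y) := by
        push_cast; abel
      rw [h2] at h1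
      exact (hle _ _ h1).trans_eq (map_add _ _ _)
    · intro q hq x
      have hq' : (0:ℝ) < q := by exact_mod_cast hq
      show _ ≤ (q:ℝ) * ⨅ t, f x t
      rw [Real.mul_iInf_of_nonneg hq'.le]
      refine le_ciInf fun t => ?_
      have h1 := hP.2 q hq _ t.2
      rw [smul_sub] at h1
      refine (hle (q • x) (q • t.1) h1).trans_eq ?_
      rw [map_smul, Rat.smul_def]
  have hNc : N c = e := by
    rw [← he.csInf_eq (let ⟨b, hb⟩ := hcof c; ⟨_, b, hb, rfl⟩)]
    show sInf _ = _
    congr 1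
    ext r
    simp [f]
  have hNB : ∀ b : B, N b ≤ μB b := by
    intro b
    have h0 : N 0 = 0 := hN.zero
    rw [← sub_nonpos, ← h0]
    refine le_ciInf fun t => ?_
    have h1 : ((t.1 + b : B) : A) - b ∈ P := by
      have := t.2
      simpa using this
    have := hle _ _ h1
    rw [map_add] at this
    simp only [f]
    linarith
  have hNP : ∀ p ∈ P, N (-p) ≤ 0 := by
    intro p hp
    have h0 : N 0 = 0 := hN.zero
    rw [← h0]
    refine le_ciInf fun t => ?_
    refine hle _ _ ?_
    have := hP.1 _ t.2 _ hp
    simpa using this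
  obtain ⟨M, hM, hMN, hMc⟩ := hN.lower c
  obtain ⟨μ, hμ⟩ := hM.exists_additive
  have hμN : ∀ x, μ x ≤ N x := fun x => (hμ x).trans (hMN x)
  refine ⟨μ, ?_, ?_, ?_⟩
  · intro b
    have h1 := (hμN b).trans (hNB b)
    have h2 := (hμN ((-b : B) : A)).trans (hNB (-b))
    rw [map_neg] at h2
    push_cast at h2
    rw [map_neg] at h2
    linarith
  · intro p hp
    have h1 := (hμN (-p)).trans (hNP p hp)
    rw [map_neg] at h1
    linarith
  · have h1 := hμN c
    have h2 := (hμ (-c)).trans hMc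
    rw [map_neg] at h2
    linarith
end

section
/- Let A be a vector space over ℚ, let Q ⊆ A be a cone such that for every d ∈ A either d ∈ Q or −d ∈ Q, and let b ∈ Q with −b ∉ Q. Assume that for every a ∈ A there exists a natural number n with n • b − a ∈ Q. Then there exists a ℚ-linear map μ : A → ℝ such that μ(b) = 1 and μ(q) ≥ 0 for every q ∈ Q. -/
theorem stmt4 {A : Type*} [AddCommGroup A] [Module ℚ A]
    (Q : Set A) (hQ : IsQCone Q) (hlin : ∀ d : A, d ∈ Q ∨ -d ∈ Q)
    (b : A) (hb : b ∈ Q) (hnb : -b ∉ Q)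
    (harch : ∀ a : A, ∃ n : ℕ, n • b - a ∈ Q) :
    ∃ μ : A →ₗ[ℚ] ℝ, μ b = 1 ∧ ∀ q ∈ Q, 0 ≤ μ q := by
  obtain ⟨hadd, hsmul⟩ := hQ
  have h0 : (0 : A) ∈ Q := by
    rcases hlin 0 with h | h
    · exact h
    · simpa using h
  -- a lower rational bound is at most an upper rational bound
  have key : ∀ (a : A) (r s : ℚ), a - r • b ∈ Q → s • b - a ∈ Q → r ≤ s := by
    intro a r s hr hs
    by_contra hlt
    push Not at hlt
    apply hnb
    have h1 := hsmul (r - s)⁻¹ (inv_pos.mpr (sub_pos.mpr hlt)) _ (hadd _ hr _ hs)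
    have h2 : a - r • b + (s • b - a) = (r - s) • (-b) := by module
    rwa [h2, smul_smul, inv_mul_cancel₀ (sub_pos.mpr hlt).ne', one_smul] at h1
  have ex : ∀ a : A, ∃ x : ℝ, (∀ r : ℚ, a - r • b ∈ Q → (r : ℝ) ≤ x) ∧
      (∀ r : ℚ, r • b - a ∈ Q → x ≤ (r : ℝ)) := by
    intro a
    obtain ⟨n, hn⟩ := harch a
    obtain ⟨k, hk⟩ := harch (-a)
    let S : Set ℝ := {x | ∃ r : ℚ, a - r • b ∈ Q ∧ (r : ℝ) = x}
    have hne : S.Nonempty := by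
      refine ⟨_, -(k : ℚ), ?_, rfl⟩
      have : a - (-(k : ℚ)) • b = k • b - -a := by
        rw [← Nat.cast_smul_eq_nsmul ℚ]; module
      rwa [this]
    have hub : ∀ r : ℚ, r • b - a ∈ Q → (r : ℝ) ∈ upperBounds S := by
      rintro r hr _ ⟨s, hs, rfl⟩
      exact_mod_cast key a s r hs hr
    have hbdd : BddAbove S := by
      refine ⟨_, hub n ?_⟩
      rwa [Nat.cast_smul_eq_nsmul ℚ]
    exact ⟨sSup S, fun r hr => le_csSup hbdd ⟨r, hr, rfl⟩,
      fun r hr => csSup_le hne (hub r hr)⟩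
  choose m hlo hup using ex
  have hlo' : ∀ (a : A) (r : ℚ), (r : ℝ) < m a → a - r • b ∈ Q := by
    intro a r h
    rcases hlin (a - r • b) with h1 | h1
    · exact h1
    · rw [neg_sub] at h1
      exact absurd (hup a r h1) (not_le.mpr h)
  have hup' : ∀ (a : A) (r : ℚ), m a < (r : ℝ) → r • b - a ∈ Q := by
    intro a r h
    rcases hlin (r • b - a) with h1 | h1
    · exact h1
    · rw [neg_sub] at h1
      exact absurd (hlo a r h1) (not_le.mpr h)
  have hmadd : ∀ a c : A, m (a + c) = m a + m c := by
    intro a c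
    apply le_antisymm
    · by_contra! hlt
      obtain ⟨r, hr1, hr2⟩ := exists_rat_btwn (show m a < m (a + c) - m c by linarith)
      obtain ⟨s, hs1, hs2⟩ := exists_rat_btwn (show m c < m (a + c) - r by linarith)
      have h := hadd _ (hup' a r hr1) _ (hup' c s hs1)
      have e : r • b - a + (s • b - c) = (r + s) • b - (a + c) := by module
      rw [e] at h
      have := hup _ _ h
      push_cast at this
      linarith
    · by_contra! hlt
      obtain ⟨r, hr1, hr2⟩ := exists_rat_btwn (show m (a + c) - m c < m a by linarith)
      obtain ⟨s, hs1, hs2⟩ := exists_rat_btwn (show m (a + c) - r < m c by linarith)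
      have h := hadd _ (hlo' a r hr2) _ (hlo' c s hs2)
      have e : a - r • b + (c - s • b) = (a + c) - (r + s) • b := by module
      rw [e] at h
      have := hlo _ _ h
      push_cast at this
      linarith
  refine ⟨(AddMonoidHom.mk' m hmadd).toRatLinearMap, ?_, ?_⟩
  · change m b = 1
    apply le_antisymm
    · simpa using hup b 1 (by simpa using h0)
    · simpa using hlo b 1 (by simpa using h0)
  · intro q hq
    change 0 ≤ m q
    simpa using hlo q 0 (by simpa using hq)
end

section
/- (VC Theorem*) Let (X, Ω, μ) be a probability space and let 𝒞 ⊆ Ω be a family of events with finite VC dimension, i.e. there is a natural number d such that no d-element subset of X is shattered by 𝒞. For each k ≥ 1, let μ^k denote the product probability measure on X^k, and let G_k : X^k → [0,1] be an essential supremum with respect to μ^k of the family of functions {p̄ ↦ |fr_k(A, p̄) − μ(A)| : A ∈ 𝒞}. Then for every ε > 0, μ^k({p̄ ∈ X^k : G_k(p̄) > ε}) → 0 as k → ∞. -/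
open MeasureTheory

/-- A family `C` of subsets of `X` shatters a finite set `F` if every subset of `F`
is of the form `F ∩ A` for some `A ∈ C`. -/
def Shatters {X : Type*} (C : Set (Set X)) (F : Finset X) : Prop :=
  ∀ S : Finset X, S ⊆ F → ∃ A ∈ C, (F : Set X) ∩ A = (S : Set X)

open Classical in
/-- `freq k A p` is the proportion of coordinates of the `k`-tuple `p` lying in `A`. -/
noncomputable def freq {X : Type*} (k : ℕ) (A : Set X) (p : Fin k → X) : ℝ :=
  ((Finset.univ.filter fun i => p i ∈ A).card : ℝ) / k

open scoped ENNReal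

section VC

lemma vc_trace_shatter {X I : Type*} [DecidableEq I] {C : Set (Set X)}
    (z : I → X) (s : Finset I)
    (h : ∀ t ⊆ s, ∃ A ∈ C, ∀ i ∈ s, i ∈ t ↔ z i ∈ A) :
    ∃ F : Finset X, F.card = s.card ∧ Shatters C F := by
  classical
  refine ⟨s.image z, ?_, ?_⟩
  · apply Finset.card_image_of_injOn
    intro i hi j hj hij
    obtain ⟨A, -, hA⟩ := h {i} (by simpa using hi)
    have h1 := hA i hi
    have h2 := hA j hj
    simp only [Finset.mem_singleton, true_iff] at h1 h2
    rw [hij] at h1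
    exact (h2.2 h1).symm
  · intro S hS
    obtain ⟨A, hAC, hA⟩ := h (s.filter fun i => z i ∈ S) (Finset.filter_subset _ _)
    refine ⟨A, hAC, ?_⟩
    ext x
    simp only [Finset.coe_image, Set.mem_inter_iff, Set.mem_image, Finset.mem_coe]
    constructor
    · rintro ⟨⟨i, hi, rfl⟩, hx⟩
      exact (Finset.mem_filter.1 ((hA i hi).2 hx)).2
    · intro hx
      obtain ⟨i, hi, rfl⟩ := Finset.mem_image.1 (hS hx)
      exact ⟨⟨i, hi, rfl⟩, (hA i hi).1 (Finset.mem_filter.2 ⟨hi, hx⟩)⟩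

open Classical in
lemma vc_trace_card {X I : Type*} [Fintype I] {C : Set (Set X)} {d : ℕ}
    (hVC : ∀ F : Finset X, F.card = d → ¬ Shatters C F)
    (z : I → X) (F : Finset C) :
    (F.image (fun A => Finset.univ.filter fun i => z i ∈ A.1)).card
      ≤ d * (Fintype.card I + 1) ^ d := by
  set 𝒜 := F.image (fun A => Finset.univ.filter fun i => z i ∈ A.1) with h𝒜
  refine (Finset.card_le_card_shatterer 𝒜).trans ?_
  have hsub : 𝒜.shatterer ⊆
      (Finset.range d).biUnion fun i => Finset.powersetCard i (Finset.univ : Finset I) := by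
    intro s hs
    rw [Finset.mem_shatterer] at hs
    simp only [Finset.mem_biUnion, Finset.mem_range, Finset.mem_powersetCard,
      Finset.subset_univ, true_and, exists_eq_right']
    by_contra hcon
    push Not at hcon
    obtain ⟨t, hts, htd⟩ := Finset.exists_subset_card_eq hcon
    have ht := hs.mono_right hts
    obtain ⟨F', hF', hsh⟩ := vc_trace_shatter (C := C) z t (by
      intro v hv
      obtain ⟨u, hu, huv⟩ := ht hv
      obtain ⟨A, hA, rfl⟩ := Finset.mem_image.1 hu
      refine ⟨A.1, A.2, fun i hi => ?_⟩
      rw [← huv]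
      simp [hi])
    exact hVC F' (hF'.trans htd) hsh
  refine (Finset.card_le_card hsub).trans (Finset.card_biUnion_le.trans ?_)
  calc ∑ i ∈ Finset.range d, (Finset.powersetCard i (Finset.univ : Finset I)).card
      ≤ ∑ i ∈ Finset.range d, (Fintype.card I + 1) ^ d := by
        apply Finset.sum_le_sum
        intro i hi
        rw [Finset.card_powersetCard, Finset.card_univ]
        calc (Fintype.card I).choose i ≤ (Fintype.card I) ^ i := Nat.choose_le_pow _ _
          _ ≤ (Fintype.card I + 1) ^ i := Nat.pow_le_pow_left (Nat.le_succ _) _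
          _ ≤ _ := Nat.pow_le_pow_right (Nat.succ_pos _) (Finset.mem_range.1 hi).le
    _ = _ := by simp

/-- The sign attached to a boolean. -/
noncomputable def vcSg (b : Bool) : ℝ := if b then 1 else -1

lemma vc_exp_sum {k : ℕ} (a : Fin k → ℝ) (ha : ∀ i, |a i| ≤ 1) (η : ℝ) :
    ∑ s : Fin k → Bool, Real.exp (η * ∑ i, vcSg (s i) * a i)
      ≤ 2 ^ k * Real.exp (k * η ^ 2 / 2) := by
  have h1 : ∑ s : Fin k → Bool, Real.exp (η * ∑ i, vcSg (s i) * a i)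
      = ∏ i : Fin k, ∑ b : Bool, Real.exp (η * (vcSg b * a i)) := by
    rw [Finset.prod_univ_sum, Fintype.piFinset_univ]
    refine Finset.sum_congr rfl fun s _ => ?_
    rw [← Real.exp_sum, Finset.mul_sum]
  rw [h1]
  calc ∏ i : Fin k, ∑ b : Bool, Real.exp (η * (vcSg b * a i))
      ≤ ∏ i : Fin k, (2 * Real.exp (η ^ 2 / 2)) := by
        apply Finset.prod_le_prod
        · intro i _; positivity
        · intro i _
          have h2 := Real.cosh_le_exp_half_sq (η * a i)
          rw [Real.cosh_eq] at h2
          have h3 : Real.exp ((η * a i) ^ 2 / 2) ≤ Real.exp (η ^ 2 / 2) := by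
            apply Real.exp_le_exp.2
            have : a i ^ 2 ≤ 1 := by rw [← sq_abs]; exact pow_le_one₀ (abs_nonneg _) (ha i)
            nlinarith [sq_nonneg η, mul_pow η (a i) 2]
          simp only [Fintype.sum_bool, vcSg, if_true, Bool.false_eq_true, if_false, one_mul,
            neg_mul, mul_neg]
          linarith
    _ = _ := by
        rw [Finset.prod_const, Finset.card_univ, Fintype.card_fin, mul_pow, ← Real.exp_nat_mul]
        congr 2; ring

/-- The uniform bound. -/
noncomputable def vcBound (d k : ℕ) (η : ℝ) : ℝ :=
  η + 2 * (d * (2 * k + 1) ^ d : ℝ) * Real.exp (-(k * η ^ 2 / 2))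

open Classical in
lemma vc_pointwise {X : Type*} {C : Set (Set X)} {d : ℕ}
    (hVC : ∀ F : Finset X, F.card = d → ¬ Shatters C F)
    {k : ℕ} (hk : 1 ≤ k) (z : Fin k → X × X) (F : Finset C) {η : ℝ} (hη : 0 < η) :
    ∑ s : Fin k → Bool, ⨆ A ∈ F, ‖(∑ i, vcSg (s i) *
      (A.1.indicator (fun _ => (1:ℝ)) (z i).1 - A.1.indicator (fun _ => (1:ℝ)) (z i).2)) / k‖ₑ
      ≤ 2 ^ k * ENNReal.ofReal (vcBound d k η) := by
  have hk0 : (0:ℝ) < k := by exact_mod_cast hk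
  let w : Fin k ⊕ Fin k → X := Sum.elim (fun i => (z i).1) (fun i => (z i).2)
  set 𝒜 := F.image (fun A => Finset.univ.filter fun i => w i ∈ A.1) with h𝒜
  have hcard : (𝒜.card : ℝ) ≤ d * (2 * k + 1) ^ d := by
    have := vc_trace_card hVC w F
    rw [Fintype.card_sum, Fintype.card_fin, ← two_mul] at this
    have h' : 𝒜.card ≤ d * (2 * k + 1) ^ d := by
      rw [h𝒜]
      convert this
    exact_mod_cast h'
  let a : Finset (Fin k ⊕ Fin k) → Fin k → ℝ := fun u i =>
    (if Sum.inl i ∈ u then 1 else 0) - (if Sum.inr i ∈ u then 1 else 0)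
  have ha : ∀ u i, |a u i| ≤ 1 := by
    intro u i; simp only [a]; split_ifs <;> simp
  let S : Finset (Fin k ⊕ Fin k) → (Fin k → Bool) → ℝ := fun u s => ∑ i, vcSg (s i) * a u i
  have hS : ∀ u s, |S u s| ≤ k := by
    intro u s
    refine (Finset.abs_sum_le_sum_abs _ _).trans ?_
    calc ∑ i, |vcSg (s i) * a u i| ≤ ∑ i : Fin k, (1:ℝ) := by
          apply Finset.sum_le_sum
          intro i _
          rw [abs_mul]
          have : |vcSg (s i)| = 1 := by unfold vcSg; split_ifs <;> simp
          rw [this, one_mul]; exact ha u i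
      _ = k := by simp
  let T : (Fin k → Bool) → ℝ := fun s => η + ∑ u ∈ 𝒜,
    (Real.exp (η * S u s) + Real.exp ((-η) * S u s)) * Real.exp (-(k * η ^ 2))
  have hT0 : ∀ s, 0 ≤ T s := fun s => by positivity
  have hT : ∀ s, ⨆ A ∈ F, ‖(∑ i, vcSg (s i) *
      (A.1.indicator (fun _ => (1:ℝ)) (z i).1 - A.1.indicator (fun _ => (1:ℝ)) (z i).2)) / k‖ₑ
      ≤ ENNReal.ofReal (T s) := by
    intro s
    refine iSup₂_le fun A hA => ?_
    rw [Real.enorm_eq_ofReal_abs]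
    apply ENNReal.ofReal_le_ofReal
    set u := Finset.univ.filter fun i => w i ∈ A.1 with hu
    have hu𝒜 : u ∈ 𝒜 := Finset.mem_image.2 ⟨A, hA, rfl⟩
    have hSu : ∑ i, vcSg (s i) *
      (A.1.indicator (fun _ => (1:ℝ)) (z i).1 - A.1.indicator (fun _ => (1:ℝ)) (z i).2) = S u s := by
      refine Finset.sum_congr rfl fun i _ => ?_
      simp [a, hu, w, Set.indicator_apply]
    rw [hSu, abs_div, abs_of_pos hk0]
    have hterm : (Real.exp (η * S u s) + Real.exp ((-η) * S u s)) * Real.exp (-(k * η ^ 2))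
        ≤ ∑ u ∈ 𝒜, (Real.exp (η * S u s) + Real.exp ((-η) * S u s)) * Real.exp (-(k * η ^ 2)) :=
      Finset.single_le_sum (f := fun u => (Real.exp (η * S u s) + Real.exp ((-η) * S u s))
        * Real.exp (-(k * η ^ 2))) (fun _ _ => by positivity) hu𝒜
    have hpos : 0 ≤ (Real.exp (η * S u s) + Real.exp ((-η) * S u s)) * Real.exp (-(k * η ^ 2)) := by
      positivity
    by_cases hle : |S u s| / k ≤ η
    · simp only [T]; linarith
    · push Not at hle
      rw [lt_div_iff₀ hk0] at hle
      have h1 : |S u s| / k ≤ 1 := by rw [div_le_one hk0]; exact hS u s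
      have h2 : Real.exp (η * |S u s|) ≤ Real.exp (η * S u s) + Real.exp ((-η) * S u s) := by
        rcases abs_cases (S u s) with ⟨h, _⟩ | ⟨h, _⟩ <;> rw [h]
        · linarith [Real.exp_pos ((-η) * S u s)]
        · rw [mul_neg, ← neg_mul]; linarith [Real.exp_pos (η * S u s)]
      have h3 : 1 ≤ Real.exp (η * |S u s|) * Real.exp (-(k * η ^ 2)) := by
        rw [← Real.exp_add]
        apply Real.one_le_exp
        nlinarith
      have h4 := mul_le_mul_of_nonneg_right h2 (Real.exp_pos (-(k * η ^ 2))).le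
      simp only [T]; linarith
  calc _ ≤ ∑ s, ENNReal.ofReal (T s) := Finset.sum_le_sum fun s _ => hT s
    _ = ENNReal.ofReal (∑ s, T s) := (ENNReal.ofReal_sum_of_nonneg fun s _ => hT0 s).symm
    _ ≤ ENNReal.ofReal (2 ^ k * vcBound d k η) := by
      apply ENNReal.ofReal_le_ofReal
      simp only [T]
      rw [Finset.sum_add_distrib, Finset.sum_comm]
      have hu : ∀ u ∈ 𝒜, ∑ s : Fin k → Bool,
          (Real.exp (η * S u s) + Real.exp ((-η) * S u s)) * Real.exp (-(k * η ^ 2))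
          ≤ 2 ^ k * (2 * Real.exp (-(k * η ^ 2 / 2))) := by
        intro u _
        rw [← Finset.sum_mul, Finset.sum_add_distrib]
        have e1 := vc_exp_sum (a u) (ha u) η
        have e2 := vc_exp_sum (a u) (ha u) (-η)
        rw [neg_sq] at e2
        have e3 : Real.exp (k * η ^ 2 / 2) * Real.exp (-(k * η ^ 2)) =
            Real.exp (-(k * η ^ 2 / 2)) := by rw [← Real.exp_add]; congr 1; ring
        calc _ ≤ (2 ^ k * Real.exp (k * η ^ 2 / 2) + 2 ^ k * Real.exp (k * η ^ 2 / 2))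
              * Real.exp (-(k * η ^ 2)) :=
              mul_le_mul_of_nonneg_right (add_le_add e1 e2) (Real.exp_pos _).le
          _ = _ := by rw [← e3]; ring
      have hsum := Finset.sum_le_sum hu
      rw [Finset.sum_const, nsmul_eq_mul] at hsum
      have hc := mul_le_mul_of_nonneg_right hcard
        (show 0 ≤ 2 ^ k * (2 * Real.exp (-(k * η ^ 2 / 2))) by positivity)
      have hconst : ∑ s : Fin k → Bool, η = 2 ^ k * η := by simp
      rw [hconst]
      unfold vcBound
      calc _ ≤ 2 ^ k * η + d * (2 * k + 1) ^ d * (2 ^ k * (2 * Real.exp (-(k * η ^ 2 / 2)))) := by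
            linarith
        _ = _ := by ring
    _ = _ := by
      rw [ENNReal.ofReal_mul (by positivity), ENNReal.ofReal_pow (by norm_num)]
      simp

/-- Existence of an essential upper bound with controlled integral. -/
lemma vc_esssup {Ω ι : Type*} [MeasurableSpace Ω] (ν : Measure Ω)
    (f : ι → Ω → ℝ≥0∞) (hf : ∀ i, Measurable (f i)) (hf1 : ∀ i x, f i x ≤ 1)
    (B : ℝ≥0∞) (hB : B ≠ ∞) (hFB : ∀ F : Finset ι, ∫⁻ x, ⨆ i ∈ F, f i x ∂ν ≤ B) :
    ∃ h : Ω → ℝ≥0∞, Measurable h ∧ (∀ x, h x ≤ 1) ∧ ∫⁻ x, h x ∂ν ≤ B ∧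
      ∀ i, f i ≤ᵐ[ν] h := by
  classical
  let φ : Finset ι → Ω → ℝ≥0∞ := fun F x => ⨆ i ∈ F, f i x
  have hφm : ∀ F, Measurable (φ F) := fun F =>
    Measurable.biSup (F : Set ι) F.countable_toSet fun i _ => hf i
  have hφmono : ∀ {F F' : Finset ι}, F ⊆ F' → φ F ≤ φ F' := fun h x =>
    biSup_mono fun i hi => h hi
  obtain ⟨v, -, hv, hvS⟩ := exists_seq_tendsto_sSup
    (S := Set.range fun F : Finset ι => ∫⁻ x, φ F x ∂ν) (Set.range_nonempty _) (OrderTop.bddAbove _)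
  choose F hF using hvS
  let H : ℕ → Finset ι := fun n => (Finset.range (n + 1)).biUnion F
  have hHmono : Monotone H := fun m n hmn =>
    Finset.biUnion_subset_biUnion_of_subset_left _ (Finset.range_mono (by omega))
  have hFH : ∀ n, F n ⊆ H n := fun n =>
    Finset.subset_biUnion_of_mem F (Finset.mem_range.2 (Nat.lt_succ_self n))
  have hint : ∀ H' : ℕ → Finset ι, Monotone H' →
      ∫⁻ x, ⨆ n, φ (H' n) x ∂ν = ⨆ n, ∫⁻ x, φ (H' n) x ∂ν := fun H' hm =>
    lintegral_iSup (fun n => hφm _) (fun m n hmn => hφmono (hm hmn))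
  have hh : ∫⁻ x, ⨆ n, φ (H n) x ∂ν ≤ B := by
    rw [hint H hHmono]; exact iSup_le fun n => hFB _
  have hhm : Measurable fun x => ⨆ n, φ (H n) x := Measurable.iSup fun n => hφm _
  refine ⟨fun x => ⨆ n, φ (H n) x, hhm,
    fun x => iSup_le fun n => iSup₂_le fun i _ => hf1 i x, hh, fun i => ?_⟩
  have hle : (fun x => ⨆ n, φ (H n) x) ≤ fun x => ⨆ n, φ (insert i (H n)) x := fun x =>
    iSup_mono fun n => hφmono (Finset.subset_insert _ _) x
  have heq := ae_eq_of_ae_le_of_lintegral_le (μ := ν) (Filter.Eventually.of_forall hle)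
    (ne_top_of_le_ne_top hB hh) (Measurable.iSup fun n => hφm _).aemeasurable (by
      rw [hint (fun n => insert i (H n)) (fun m n hmn => Finset.insert_subset_insert _ (hHmono hmn)),
        hint H hHmono]
      calc _ ≤ sSup (Set.range fun F : Finset ι => ∫⁻ x, φ F x ∂ν) :=
            iSup_le fun n => le_sSup ⟨_, rfl⟩
        _ ≤ _ := by
            refine le_of_tendsto' hv fun n => ?_
            rw [← hF n]
            exact le_iSup_of_le n (lintegral_mono (hφmono (hFH n))))
  filter_upwards [heq] with x hx
  rw [hx]
  exact le_iSup_of_le 0 (le_iSup₂_of_le i (Finset.mem_insert_self _ _) le_rfl)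

lemma vc_freq {X : Type*} (k : ℕ) (A : Set X) (p : Fin k → X) :
    freq k A p = (∑ i, A.indicator (fun _ => (1:ℝ)) (p i)) / k := by
  classical
  unfold freq
  congr 1
  rw [Finset.card_filter]
  push_cast
  refine Finset.sum_congr rfl fun i _ => ?_
  simp [Set.indicator_apply]

lemma vc_freq_meas {X : Type*} [MeasurableSpace X] (k : ℕ) {A : Set X} (hA : MeasurableSet A) :
    Measurable (freq k A) := by
  have : freq k A = fun p => (∑ i, A.indicator (fun _ => (1:ℝ)) (p i)) / k :=
    funext fun p => vc_freq k A p
  rw [this]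
  have hi : Measurable (A.indicator (fun _ => (1:ℝ))) := measurable_const.indicator hA
  fun_prop

lemma vc_freq_mem {X : Type*} (k : ℕ) (A : Set X) (p : Fin k → X) :
    freq k A p ∈ Set.Icc (0:ℝ) 1 := by
  classical
  unfold freq
  refine ⟨by positivity, div_le_one_of_le₀ ?_ (by positivity)⟩
  exact_mod_cast (Finset.card_filter_le _ _).trans (by simp)

lemma vc_freq_int {X : Type*} [MeasurableSpace X] (μ : Measure X) [IsProbabilityMeasure μ]
    {k : ℕ} (hk : 1 ≤ k) {A : Set X} (hA : MeasurableSet A) :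
    Integrable (freq k A) (Measure.pi fun _ : Fin k => μ) ∧
    ∫ q, freq k A q ∂(Measure.pi fun _ : Fin k => μ) = (μ A).toReal := by
  have hk0 : (0:ℝ) < k := by exact_mod_cast hk
  have hi : Measurable (A.indicator (fun _ => (1:ℝ))) := measurable_const.indicator hA
  constructor
  · refine Integrable.of_bound (vc_freq_meas k hA).aestronglyMeasurable 1
      (Filter.Eventually.of_forall fun p => ?_)
    have := vc_freq_mem k A p
    rw [Real.norm_eq_abs, abs_of_nonneg this.1]; exact this.2
  · simp_rw [vc_freq]
    rw [integral_div, integral_finsetSum]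
    · have : ∀ i : Fin k, ∫ q, A.indicator (fun _ => (1:ℝ)) (q i) ∂(Measure.pi fun _ : Fin k => μ)
          = (μ A).toReal := by
        intro i
        have hmp := measurePreserving_eval (fun _ : Fin k => μ) i
        have := integral_map (μ := Measure.pi fun _ : Fin k => μ) hmp.measurable.aemeasurable
          (f := A.indicator (fun _ => (1:ℝ))) hi.aestronglyMeasurable
        rw [hmp.map_eq] at this
        rw [integral_indicator hA] at this
        simp only [integral_const, smul_eq_mul, mul_one] at this
        simp only [Function.eval] at this
        rw [← this]
        simp [Measure.real]
      simp only [this, Finset.sum_const, Finset.card_univ, Fintype.card_fin, nsmul_eq_mul]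
      field_simp
    · intro i _
      refine Integrable.of_bound (hi.comp (measurable_pi_apply i)).aestronglyMeasurable 1
        (Filter.Eventually.of_forall fun p => ?_)
      change ‖A.indicator (fun _ => (1:ℝ)) (p i)‖ ≤ 1
      classical
      rw [Set.indicator_apply]
      split_ifs <;> simp

open Classical in
lemma vc_symm {X : Type*} [MeasurableSpace X] (μ : Measure X) [IsProbabilityMeasure μ]
    {C : Set (Set X)} (hCmeas : ∀ A ∈ C, MeasurableSet A) {d : ℕ}
    (hVC : ∀ F : Finset X, F.card = d → ¬ Shatters C F)
    {k : ℕ} (hk : 1 ≤ k) (F : Finset C) {η : ℝ} (hη : 0 < η) :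
    ∫⁻ p, ⨆ A ∈ F, ‖freq k A.1 p - (μ A.1).toReal‖ₑ ∂(Measure.pi fun _ : Fin k => μ)
      ≤ ENNReal.ofReal (vcBound d k η) := by
  set P := Measure.pi fun _ : Fin k => μ with hP
  let Ψ : (Fin k → X) × (Fin k → X) → ℝ≥0∞ := fun w => ⨆ A ∈ F, ‖freq k A.1 w.1 - freq k A.1 w.2‖ₑ
  have hΨ : Measurable Ψ := by
    refine Measurable.biSup (F : Set C) F.countable_toSet fun A _ => ?_
    have := vc_freq_meas k (hCmeas A.1 A.2)
    exact ((this.comp measurable_fst).sub (this.comp measurable_snd)).enorm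
  have h1 : ∫⁻ p, ⨆ A ∈ F, ‖freq k A.1 p - (μ A.1).toReal‖ₑ ∂P ≤ ∫⁻ w, Ψ w ∂(P.prod P) := by
    rw [lintegral_prod _ hΨ.aemeasurable]
    refine lintegral_mono fun p => iSup₂_le fun A hA => ?_
    obtain ⟨hi, he⟩ := vc_freq_int μ hk (hCmeas A.1 A.2)
    have : freq k A.1 p - (μ A.1).toReal = ∫ q, (freq k A.1 p - freq k A.1 q) ∂P := by
      rw [integral_sub (integrable_const _) hi, he]; simp
    rw [this]
    refine (enorm_integral_le_lintegral_enorm _).trans (lintegral_mono fun q => ?_)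
    exact le_iSup₂_of_le (f := fun (A : C) (_ : A ∈ F) => ‖freq k A.1 p - freq k A.1 q‖ₑ) A hA le_rfl
  refine h1.trans ?_
  set Q := Measure.pi fun _ : Fin k => μ.prod μ with hQ
  have hmp := measurePreserving_arrowProdEquivProdArrow X X (Fin k) (fun _ => μ) (fun _ => μ)
  let Θ : (Fin k → Bool) → (Fin k → X × X) → ℝ≥0∞ := fun s z => ⨆ A ∈ F, ‖(∑ i, vcSg (s i) *
      (A.1.indicator (fun _ => (1:ℝ)) (z i).1 - A.1.indicator (fun _ => (1:ℝ)) (z i).2)) / k‖ₑ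
  have hswap : ∀ s : Fin k → Bool, ∫⁻ w, Ψ w ∂(P.prod P) = ∫⁻ z, Θ s z ∂Q := by
    intro s
    have hsm : MeasurePreserving
        (fun (z : Fin k → X × X) i => (if s i then id else Prod.swap : X × X → X × X) (z i)) Q Q := by
      refine measurePreserving_pi (fun _ : Fin k => μ.prod μ) (fun _ => μ.prod μ) fun i => ?_
      split_ifs
      · exact MeasurePreserving.id _
      · exact Measure.measurePreserving_swap
    rw [← (hmp.comp hsm).lintegral_comp hΨ]
    refine lintegral_congr fun z => ?_
    simp only [Ψ, Θ]
    refine iSup_congr fun A => iSup_congr fun hA => ?_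
    congr 1
    simp only [vc_freq]
    rw [← sub_div, ← Finset.sum_sub_distrib]
    congr 1
    refine Finset.sum_congr rfl fun i _ => ?_
    simp only [Function.comp, MeasurableEquiv.arrowProdEquivProdArrow, MeasurableEquiv.coe_mk,
      Equiv.arrowProdEquivProdArrow, Equiv.coe_fn_mk, vcSg]
    split_ifs <;> simp
  have hΘ : ∀ s, Measurable (Θ s) := by
    intro s
    refine Measurable.biSup (F : Set C) F.countable_toSet fun A _ => ?_
    have hi : Measurable (A.1.indicator (fun _ => (1:ℝ))) :=
      measurable_const.indicator (hCmeas A.1 A.2)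
    fun_prop
  have hsum : 2 ^ k * ∫⁻ w, Ψ w ∂(P.prod P) ≤ 2 ^ k * ENNReal.ofReal (vcBound d k η) := by
    calc 2 ^ k * ∫⁻ w, Ψ w ∂(P.prod P) = ∑ s : Fin k → Bool, ∫⁻ w, Ψ w ∂(P.prod P) := by simp
      _ = ∑ s : Fin k → Bool, ∫⁻ z, Θ s z ∂Q := Finset.sum_congr rfl fun s _ => hswap s
      _ = ∫⁻ z, ∑ s : Fin k → Bool, Θ s z ∂Q :=
          (lintegral_finsetSum _ fun s _ => hΘ s).symm
      _ ≤ ∫⁻ z, 2 ^ k * ENNReal.ofReal (vcBound d k η) ∂Q :=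
          lintegral_mono fun z => vc_pointwise hVC hk z F hη
      _ = _ := by simp
  exact (ENNReal.mul_le_mul_iff_right (by positivity) (by simp)).1 hsum

lemma vc_bound_tendsto (d : ℕ) {η : ℝ} (hη : 0 < η) :
    Filter.Tendsto (fun k : ℕ => vcBound d k η) Filter.atTop (nhds η) := by
  have h1 := Real.tendsto_pow_mul_exp_neg_atTop_nhds_zero d
  have h2 : Filter.Tendsto (fun k : ℕ => (2 * (k:ℝ) + 1) * (η ^ 2 / 4)) Filter.atTop Filter.atTop := by
    apply Filter.Tendsto.atTop_mul_const (by positivity)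
    apply Filter.tendsto_atTop_add_const_right
    exact tendsto_natCast_atTop_atTop.const_mul_atTop (by norm_num)
  have h3 := (h1.comp h2).const_mul (2 * d * (4 / η ^ 2) ^ d * Real.exp (η ^ 2 / 4))
  have h4 := h3.const_add η
  rw [mul_zero, add_zero] at h4
  refine h4.congr fun k => ?_
  unfold vcBound
  simp only [Function.comp]
  have e1 : Real.exp (-(k * η ^ 2 / 2)) =
      Real.exp (η ^ 2 / 4) * Real.exp (-((2 * (k:ℝ) + 1) * (η ^ 2 / 4))) := by
    rw [← Real.exp_add]; congr 1; ring
  have e2 : (2 * (k:ℝ) + 1) ^ d = (4 / η ^ 2) ^ d * ((2 * (k:ℝ) + 1) * (η ^ 2 / 4)) ^ d := by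
    rw [← mul_pow]; congr 1; field_simp
  rw [e1, e2]; ring

end VC

theorem stmt6 {X : Type*} [MeasurableSpace X]
    (μ : Measure X) [IsProbabilityMeasure μ]
    (C : Set (Set X)) (hCmeas : ∀ A ∈ C, MeasurableSet A)
    (d : ℕ) (hVC : ∀ F : Finset X, F.card = d → ¬ Shatters C F)
    (G : (k : ℕ) → (Fin k → X) → ℝ)
    (hGmeas : ∀ k, 1 ≤ k → Measurable (G k))
    (hGrange : ∀ k, 1 ≤ k → ∀ p, G k p ∈ Set.Icc (0 : ℝ) 1)
    (hGup : ∀ k, 1 ≤ k → ∀ A ∈ C,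
      ∀ᵐ p ∂(Measure.pi fun _ : Fin k => μ), |freq k A p - (μ A).toReal| ≤ G k p)
    (hGmin : ∀ k, 1 ≤ k → ∀ h : (Fin k → X) → ℝ, Measurable h →
      (∀ p, h p ∈ Set.Icc (0 : ℝ) 1) →
      (∀ A ∈ C, ∀ᵐ p ∂(Measure.pi fun _ : Fin k => μ),
        |freq k A p - (μ A).toReal| ≤ h p) →
      ∀ᵐ p ∂(Measure.pi fun _ : Fin k => μ), G k p ≤ h p) :
    ∀ ε : ℝ, 0 < ε →
      Filter.Tendsto (fun k => (Measure.pi fun _ : Fin k => μ) {p | ε < G k p})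
        Filter.atTop (nhds 0) := by
  intro ε hε
  have key : ∀ η : ℝ, 0 < η → ∀ k, 1 ≤ k →
      (Measure.pi fun _ : Fin k => μ) {p | ε < G k p}
        ≤ ENNReal.ofReal (vcBound d k η) / ENNReal.ofReal ε := by
    intro η hη k hk
    obtain ⟨h, hm, h1, hB, hup⟩ := vc_esssup (Measure.pi fun _ : Fin k => μ)
      (fun (A : C) p => ‖freq k A.1 p - (μ A.1).toReal‖ₑ)
      (fun A => ((vc_freq_meas k (hCmeas A.1 A.2)).sub_const _).enorm)
      (fun A p => by
        rw [Real.enorm_eq_ofReal_abs, ENNReal.ofReal_le_one, abs_le]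
        have a1 := vc_freq_mem k A.1 p
        have a2 : (μ A.1).toReal ≤ 1 := measureReal_le_one
        have a3 : 0 ≤ (μ A.1).toReal := ENNReal.toReal_nonneg
        constructor <;> linarith [a1.1, a1.2])
      (ENNReal.ofReal (vcBound d k η)) ENNReal.ofReal_ne_top
      (fun F => vc_symm μ hCmeas hVC hk F hη)
    have hfin : ∀ p, h p ≠ ∞ := fun p => ne_top_of_le_ne_top ENNReal.one_ne_top (h1 p)
    have hG := hGmin k hk (fun p => (h p).toReal) hm.ennreal_toReal
      (fun p => ⟨ENNReal.toReal_nonneg, ENNReal.toReal_le_of_le_ofReal zero_le_one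
        (by simpa using h1 p)⟩)
      (fun A hA => by
        filter_upwards [hup ⟨A, hA⟩] with p hp
        rw [Real.enorm_eq_ofReal_abs] at hp
        exact (ENNReal.ofReal_le_iff_le_toReal (hfin p)).1 hp)
    calc (Measure.pi fun _ : Fin k => μ) {p | ε < G k p}
        ≤ (Measure.pi fun _ : Fin k => μ) {p | ENNReal.ofReal ε ≤ h p} := by
          apply measure_mono_ae
          filter_upwards [hG] with p hp hp'
          exact (ENNReal.ofReal_le_iff_le_toReal (hfin p)).2 (le_trans (le_of_lt hp') hp)
      _ ≤ (∫⁻ p, h p ∂(Measure.pi fun _ : Fin k => μ)) / ENNReal.ofReal ε :=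
          meas_ge_le_lintegral_div hm.aemeasurable (by simpa using hε) ENNReal.ofReal_ne_top
      _ ≤ _ := ENNReal.div_le_div_right hB _
  rw [ENNReal.tendsto_nhds_zero]
  intro δ hδ
  by_cases hδt : δ = ∞
  · exact Filter.Eventually.of_forall fun k => by rw [hδt]; exact le_top
  have hδ' : 0 < δ.toReal := ENNReal.toReal_pos hδ.ne' hδt
  have hη : 0 < ε * δ.toReal / 2 := by positivity
  have hev := (vc_bound_tendsto d hη).eventually_le_const
    (show ε * δ.toReal / 2 < ε * δ.toReal by linarith)
  filter_upwards [hev, Filter.eventually_ge_atTop 1] with k hk hk1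
  refine (key _ hη k hk1).trans ?_
  rw [← ENNReal.ofReal_div_of_pos hε]
  apply ENNReal.ofReal_le_of_le_toReal
  rw [div_le_iff₀ hε]
  linarith
end
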